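/- arXiv:2004.06959 — 2 statements merged into one kernel-verified Lean document; each statement's English description precedes it below -/
import Mathlib

section
/- Let M be a finite abelian group written additively and let f : M → M be an endomorphism. Then for every i ≥ 1 the order of the quotient ker(f^{i+1})/ker(f^i) divides the order of ker(f^i)/ker(f^{i−1}). In particular the sequence i ↦ #(ker(f^{i+1})/ker(f^i)) is decreasing, and every term of this sequence divides #ker(f) = #(ker(f^1)/ker(f^0)). -/
/-- The `i`-th quotient of the kernel filtration of the endomorphism `f`:
`ker (f^(i+1)) / ker (f^i)`. -/
def filtQuot {M : Type*} [AddCommGroup M] (f : AddMonoid.End M) (i : ℕ) : Type _ :=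
  (f ^ (i + 1)).ker ⧸ ((f ^ i).ker.addSubgroupOf (f ^ (i + 1)).ker)

/-!
The power `f ^ i` maps `ker (f ^ (i + 1))` onto `im (f ^ i) ⊓ ker f`, with kernel `ker (f ^ i)`, so
the `i`-th quotient of the kernel filtration is isomorphic to `im (f ^ i) ⊓ ker f`. These are
subgroups of `ker f` that decrease as `i` grows, and Lagrange's theorem gives the divisibilities.
-/

theorem map_ker_comp_eq_range_inf_ker {M N P : Type*} [AddGroup M] [AddGroup N] [AddGroup P]
    (g : N →+ P) (f : M →+ N) : (g.comp f).ker.map f = f.range ⊓ g.ker := by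
  rw [← AddMonoidHom.comap_ker, AddSubgroup.map_comap_eq]

theorem antitone_range_pow {M : Type*} [AddGroup M] (f : AddMonoid.End M) :
    Antitone fun i : ℕ => (f ^ i).range := by
  refine antitone_nat_of_succ_le fun i => ?_
  rw [pow_succ]
  exact (AddMonoidHom.range_comp _ _).trans_le (AddSubgroup.map_le_range _ _)

section KernelFiltration

variable {M : Type*} [AddCommGroup M] (f : AddMonoid.End M)

theorem card_filtQuot (i : ℕ) :
    Nat.card (filtQuot f i) = Nat.card ↥((f ^ i).range ⊓ f.ker) := by
  have map_ker_pow_succ : (f ^ (i + 1)).ker.map (f ^ i) = (f ^ i).range ⊓ f.ker := by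
    rw [pow_succ']
    exact map_ker_comp_eq_range_inf_ker f (f ^ i)
  calc
    Nat.card (filtQuot f i) = (f ^ i).ker.relIndex (f ^ (i + 1)).ker := rfl
    _ = Nat.card ((f ^ (i + 1)).ker.map (f ^ i)) := AddSubgroup.relIndex_ker _ _
    _ = Nat.card ↥((f ^ i).range ⊓ f.ker) := by rw [map_ker_pow_succ]

theorem card_filtQuot_zero : Nat.card (filtQuot f 0) = Nat.card f.ker := by
  have range_one : (1 : AddMonoid.End M).range = ⊤ :=
    AddMonoidHom.range_eq_top.mpr Function.surjective_id
  rw [card_filtQuot, pow_zero, range_one, top_inf_eq]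

theorem card_filtQuot_dvd_of_le {i j : ℕ} (hij : i ≤ j) :
    Nat.card (filtQuot f j) ∣ Nat.card (filtQuot f i) := by
  rw [card_filtQuot, card_filtQuot]
  exact AddSubgroup.card_dvd_of_le (inf_le_inf_right _ (antitone_range_pow f hij))

theorem card_filtQuot_dvd_card_ker (i : ℕ) : Nat.card (filtQuot f i) ∣ Nat.card f.ker :=
  card_filtQuot_zero f ▸ card_filtQuot_dvd_of_le f (Nat.zero_le i)

theorem card_filtQuot_pos [Finite f.ker] (i : ℕ) : 0 < Nat.card (filtQuot f i) :=
  Nat.pos_of_dvd_of_pos (card_filtQuot_dvd_card_ker f i) Nat.card_pos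

theorem filtQuot_card_dvd_general [Finite f.ker] :
    (∀ i : ℕ, 1 ≤ i → Nat.card (filtQuot f i) ∣ Nat.card (filtQuot f (i - 1))) ∧
    (∀ i j : ℕ, i ≤ j → Nat.card (filtQuot f j) ≤ Nat.card (filtQuot f i)) ∧
    (Nat.card f.ker = Nat.card (filtQuot f 0)) ∧
    (∀ i : ℕ, Nat.card (filtQuot f i) ∣ Nat.card f.ker) := by
  refine ⟨fun i _ => ?_, fun i j hij => ?_, ?_, card_filtQuot_dvd_card_ker f⟩
  · exact card_filtQuot_dvd_of_le f (Nat.sub_le i 1)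
  · exact Nat.le_of_dvd (card_filtQuot_pos f i) (card_filtQuot_dvd_of_le f hij)
  · exact (card_filtQuot_zero f).symm

end KernelFiltration

/-- Let `M` be a finite abelian group (additive) and `f : M → M` an
endomorphism. Then for every `i ≥ 1` the order of `ker (f^(i+1)) / ker (f^i)` divides
the order of `ker (f^i) / ker (f^(i-1))`.  In particular the sequence
`i ↦ #(ker (f^(i+1)) / ker (f^i))` is decreasing, and every term of this sequence
divides `# ker f = #(ker (f^1) / ker (f^0))`. -/
theorem filtQuot_card_dvd {M : Type*} [AddCommGroup M] [Finite M]
    (f : AddMonoid.End M) :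
    (∀ i : ℕ, 1 ≤ i → Nat.card (filtQuot f i) ∣ Nat.card (filtQuot f (i - 1))) ∧
    (∀ i j : ℕ, i ≤ j → Nat.card (filtQuot f j) ≤ Nat.card (filtQuot f i)) ∧
    (Nat.card f.ker = Nat.card (filtQuot f 0)) ∧
    (∀ i : ℕ, Nat.card (filtQuot f i) ∣ Nat.card f.ker) :=
  filtQuot_card_dvd_general f
end

section
/- Let M and M′ be finite abelian groups written additively, let f : M → M and f′ : M′ → M′ be endomorphisms, and let N : M′ → M be a surjective group homomorphism satisfying N ∘ f′ = f ∘ N. Then for every i ≥ 0, the order of ker(f^{i+1})/ker(f^i) divides the order of ker(f′^{i+1})/ker(f′^i). -/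
/-! The map `f ^ i` identifies `ker (f ^ (i + 1)) / ker (f ^ i)` with the kernel of `f` restricted
to `im (f ^ i)`. When `im (f ^ i)` is finite, this kernel has the same order as the cokernel
`im (f ^ i) / im (f ^ (i + 1))`. Unlike the kernels, the images are carried onto each other by `N`,
so the cokernel of `f'` surjects onto that of `f`. -/

section AddGroup

variable {G G' H H' : Type*} [AddGroup G] [AddGroup G'] [AddGroup H] [AddGroup H']

theorem relIndex_map_map_dvd_relIndex (φ : G →+ G') (A B : AddSubgroup G) :
    (A.map φ).relIndex (B.map φ) ∣ A.relIndex B := by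
  rw [← AddSubgroup.relIndex_comap]
  exact AddSubgroup.relIndex_dvd_of_le_left B (AddSubgroup.le_comap_map φ A)

theorem card_ker_inf_mul_card_map (φ : G →+ G') (A : AddSubgroup G) :
    Nat.card ↥(φ.ker ⊓ A) * Nat.card (A.map φ) = Nat.card A := by
  simpa only [AddSubgroup.relIndex_bot_left, AddSubgroup.relIndex_ker, bot_inf_eq] using
    AddSubgroup.relIndex_inf_mul_relIndex ⊥ φ.ker A

theorem card_ker_inf_eq_relIndex_map (φ : G →+ G) (A : AddSubgroup G) [Finite A]
    (hA : A.map φ ≤ A) : Nat.card ↥(φ.ker ⊓ A) = (A.map φ).relIndex A := by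
  have : Finite (A.map φ) := Finite.Set.subset (A : Set G) hA
  refine Nat.eq_of_mul_eq_mul_right (Nat.card_pos (α := A.map φ)) ?_
  calc Nat.card ↥(φ.ker ⊓ A) * Nat.card (A.map φ)
      = Nat.card A := card_ker_inf_mul_card_map φ A
    _ = Nat.card (A.map φ) * (A.map φ).relIndex A := by
      simpa only [AddSubgroup.relIndex_bot_left] using
        (AddSubgroup.relIndex_mul_relIndex ⊥ (A.map φ) A bot_le hA).symm
    _ = (A.map φ).relIndex A * Nat.card (A.map φ) := mul_comm _ _

theorem relIndex_ker_ker_comp (φ : G' →+ H) (ψ : G →+ G') :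
    ψ.ker.relIndex (φ.comp ψ).ker = Nat.card ↥(φ.ker ⊓ ψ.range) := by
  rw [AddSubgroup.relIndex_ker, ← AddMonoidHom.comap_ker, AddSubgroup.map_comap_eq, inf_comm]

theorem map_range_eq_range_of_comp_eq_comp {φ : G →+ H} {φ' : G' →+ H'} {N : G' →+ G}
    {P : H' →+ H} (hN : Function.Surjective N) (h : P.comp φ' = φ.comp N) :
    φ'.range.map P = φ.range := by
  rw [AddMonoidHom.map_range, h, AddMonoidHom.range_comp,
    AddMonoidHom.range_eq_top_of_surjective N hN, AddMonoidHom.range_eq_map]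

theorem range_pow_succ (f : AddMonoid.End G) (i : ℕ) :
    AddMonoidHom.range (f ^ (i + 1)) = (AddMonoidHom.range (f ^ i)).map f := by
  rw [pow_succ']
  exact AddMonoidHom.range_comp f (f ^ i)

theorem range_pow_succ_le (f : AddMonoid.End G) (i : ℕ) :
    AddMonoidHom.range (f ^ (i + 1)) ≤ AddMonoidHom.range (f ^ i) := by
  rintro _ ⟨x, rfl⟩
  exact ⟨f x, (DFunLike.congr_fun (pow_succ f i) x).symm⟩

theorem map_range_pow_of_semiconj {f : AddMonoid.End G} {f' : AddMonoid.End G'} {N : G' →+ G}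
    (hN : Function.Surjective N) (h : Function.Semiconj N f' f) (i : ℕ) :
    (AddMonoidHom.range (f' ^ i)).map N = AddMonoidHom.range (f ^ i) :=
  map_range_eq_range_of_comp_eq_comp hN (AddMonoidHom.ext (h.iterate_right i))

end AddGroup

section AddCommGroup

variable {M M' : Type*} [AddCommGroup M] [AddCommGroup M']

theorem card_filtQuot_eq_card_ker_inf_range (f : AddMonoid.End M) (i : ℕ) :
    Nat.card (filtQuot f i) = Nat.card ↥(AddMonoidHom.ker f ⊓ AddMonoidHom.range (f ^ i)) := by
  change (f ^ i).ker.relIndex (f ^ (i + 1)).ker = _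
  rw [pow_succ']
  exact relIndex_ker_ker_comp f (f ^ i)

theorem card_filtQuot_eq_relIndex_range (f : AddMonoid.End M) (i : ℕ)
    [Finite (AddMonoidHom.range (f ^ i))] :
    Nat.card (filtQuot f i) =
      (AddMonoidHom.range (f ^ (i + 1))).relIndex (AddMonoidHom.range (f ^ i)) := by
  have hle := range_pow_succ_le f i
  rw [range_pow_succ] at hle ⊢
  rw [card_filtQuot_eq_card_ker_inf_range, card_ker_inf_eq_relIndex_map f _ hle]

theorem filtQuot_card_dvd_of_surjective_intertwiner_general
    (f : AddMonoid.End M) (f' : AddMonoid.End M') (N : M' →+ M)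
    (hN : Function.Surjective N) (hcomm : ∀ x : M', N (f' x) = f (N x))
    (i : ℕ) [Finite (AddMonoidHom.range (f' ^ i))] :
    Nat.card (filtQuot f i) ∣ Nat.card (filtQuot f' i) := by
  have hmap := map_range_pow_of_semiconj hN hcomm
  have : Finite (AddMonoidHom.range (f ^ i)) :=
    hmap i ▸ Finite.Set.finite_image (AddMonoidHom.range (f' ^ i) : Set M') N
  rw [card_filtQuot_eq_relIndex_range, card_filtQuot_eq_relIndex_range, ← hmap, ← hmap]
  exact relIndex_map_map_dvd_relIndex N _ _

end AddCommGroup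

/-- Let `M`, `M'` be finite abelian groups (additive), `f : M → M`,
`f' : M' → M'` endomorphisms, and `N : M' → M` a surjective group homomorphism with
`N ∘ f' = f ∘ N`. Then for every `i ≥ 0`, the order of `ker (f^(i+1)) / ker (f^i)`
divides the order of `ker (f'^(i+1)) / ker (f'^i)`. -/
theorem filtQuot_card_dvd_of_surjective_intertwiner {M M' : Type*}
    [AddCommGroup M] [AddCommGroup M'] [Finite M] [Finite M']
    (f : AddMonoid.End M) (f' : AddMonoid.End M') (N : M' →+ M)
    (hN : Function.Surjective N) (hcomm : ∀ x : M', N (f' x) = f (N x)) :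
    ∀ i : ℕ, Nat.card (filtQuot f i) ∣ Nat.card (filtQuot f' i) := by
  intro i
  exact filtQuot_card_dvd_of_surjective_intertwiner_general f f' N hN hcomm i
end
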